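/- arXiv:2501.16062 — 2 statements merged into one kernel-verified Lean document; each statement's English description precedes it below -/
import Mathlib

section
/- Let R be a commutative ring, let n ≥ 1, and let M be an n × n matrix over R. Suppose there is an element t ∈ R such that the entry M₀₀ = 0, and t divides every entry M₀ⱼ of the first row and every entry Mᵢ₀ of the first column. Then t² divides det M. -/
/-!
In the Leibniz expansion `det M = ∑ σ, sign σ * ∏ i, M (σ i) i`, a permutation fixing `0`
contributes zero because `M₀₀ = 0`. For any other `σ` the indices `0` and `σ⁻¹ 0` are distinct;
the first selects an entry of the first column and the second an entry of the first row, so the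
product contains two separate factors divisible by `t`.
-/

/-- If `M` is an `n × n` matrix over a commutative ring `R` with `n ≥ 1`,
`M₀₀ = 0`, and `t` divides every entry of the first row and first column of `M`,
then `t²` divides `det M`. -/
theorem t_sq_dvd_det_of_first_row_col {R : Type*} [CommRing R] {n : ℕ} (hn : 1 ≤ n)
    (M : Matrix (Fin n) (Fin n) R) (t : R)
    (h00 : M ⟨0, hn⟩ ⟨0, hn⟩ = 0)
    (hrow : ∀ j : Fin n, t ∣ M ⟨0, hn⟩ j)
    (hcol : ∀ i : Fin n, t ∣ M i ⟨0, hn⟩) :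
    t ^ 2 ∣ M.det := by
  rw [Matrix.det_apply']
  refine Finset.dvd_sum fun σ _ => Dvd.dvd.mul_left ?_ _
  set z : Fin n := ⟨0, hn⟩
  by_cases hσ : σ z = z
  · rw [Finset.prod_eq_zero (Finset.mem_univ z) (by rw [hσ, h00])]
    exact dvd_zero _
  · have hne : z ≠ σ.symm z := fun h => hσ ((Equiv.eq_symm_apply σ).mp h)
    have hpair : t ^ 2 ∣ ∏ i ∈ {z, σ.symm z}, M (σ i) i := by
      rw [Finset.prod_pair hne, Equiv.apply_symm_apply, sq]
      exact mul_dvd_mul (hcol _) (hrow _)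
    exact hpair.trans (Finset.prod_dvd_prod_of_subset _ _ _ (Finset.subset_univ _))
end

section
/- Let Q₁, Q₂, Q₃ be symmetric 8 × 8 matrices with entries in ℂ. Assume that every entry of Q₁ and of Q₂ in row 0 or column 0 is zero (i.e. (Q₁)₀ᵢ = (Q₁)ᵢ₀ = (Q₂)₀ᵢ = (Q₂)ᵢ₀ = 0 for all i), and that the (0,0) entry of Q₃ is zero. Let M be the 8 × 8 matrix with entries in the polynomial ring ℂ[λ₁, λ₂, λ₃] given by M = λ₁·Q₁ + λ₂·Q₂ + λ₃·Q₃. Then there exists a polynomial f ∈ ℂ[λ₁, λ₂, λ₃] such that det M = λ₃² · f. -/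
open MvPolynomial

/-!
Every entry of row `0` and of column `0` of `M` is a multiple of `λ₃`, and `M 0 0 = 0`. In the
Leibniz expansion of `det M`, the term of a permutation fixing `0` contains the factor `M 0 0`,
and the term of any other permutation contains two distinct factors, one from row `0` and one
from column `0`. Hence each term is divisible by `λ₃²`.
-/

theorem sq_dvd_det_of_dvd_row_col {n R : Type*} [Fintype n] [DecidableEq n] [CommRing R]
    (A : Matrix n n R) (a : R) (k : n) (hrow : ∀ j, a ∣ A k j) (hcol : ∀ i, a ∣ A i k)
    (hk : a ^ 2 ∣ A k k) : a ^ 2 ∣ A.det := by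
  rw [Matrix.det_apply']
  refine Finset.dvd_sum fun σ _ => Dvd.dvd.mul_left ?_ _
  by_cases hσ : σ k = k
  · have h := Finset.dvd_prod_of_mem (fun i => A (σ i) i) (Finset.mem_univ k)
    simp only [hσ] at h
    exact hk.trans h
  · have hne : σ.symm k ≠ k := fun h => hσ (by rw [← h, Equiv.apply_symm_apply, h])
    rw [← Finset.mul_prod_erase _ _ (Finset.mem_univ k), sq]
    refine mul_dvd_mul (hcol _) ?_
    have h := Finset.dvd_prod_of_mem (fun i => A (σ i) i)
      (Finset.mem_erase.2 ⟨hne, Finset.mem_univ (σ.symm k)⟩)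
    simp only [Equiv.apply_symm_apply] at h
    exact (hrow _).trans h

/-- If `Q₁, Q₂, Q₃` are symmetric `8 × 8` complex matrices with the row and column
indexed by `0` of `Q₁` and `Q₂` vanishing, and the `(0,0)` entry of `Q₃` vanishing,
then `λ₃²` divides `det (λ₁ Q₁ + λ₂ Q₂ + λ₃ Q₃)` in `ℂ[λ₁, λ₂, λ₃]`. -/
theorem lambda3_sq_dvd_det_net (Q₁ Q₂ Q₃ : Matrix (Fin 8) (Fin 8) ℂ)
    (hQ₁ : Q₁.IsSymm) (hQ₂ : Q₂.IsSymm) (hQ₃ : Q₃.IsSymm)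
    (h₁row : ∀ i : Fin 8, Q₁ 0 i = 0) (h₁col : ∀ i : Fin 8, Q₁ i 0 = 0)
    (h₂row : ∀ i : Fin 8, Q₂ 0 i = 0) (h₂col : ∀ i : Fin 8, Q₂ i 0 = 0)
    (h₃ : Q₃ 0 0 = 0)
    (M : Matrix (Fin 8) (Fin 8) (MvPolynomial (Fin 3) ℂ))
    (hM : M = (X 0 : MvPolynomial (Fin 3) ℂ) • Q₁.map C
            + (X 1 : MvPolynomial (Fin 3) ℂ) • Q₂.map C
            + (X 2 : MvPolynomial (Fin 3) ℂ) • Q₃.map C) :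
    ∃ f : MvPolynomial (Fin 3) ℂ, M.det = (X 2) ^ 2 * f := by
  subst hM
  refine sq_dvd_det_of_dvd_row_col _ _ 0 (fun j => ?_) (fun i => ?_) ?_
  · simp [h₁row, h₂row]
  · simp [h₁col, h₂col]
  · simp [h₁row, h₂row, h₃]
end
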